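/- Let (A, m, k) be a Noetherian local ring, E the injective hull of k, and M a finitely generated A-module. Then Hom_A(Hom_A(M, E), E) is isomorphic to the m-adic completion of M. -/

import Mathlib

open IsLocalRing

namespace Matlis

set_option linter.unusedSectionVars false

variable {A : Type} [CommRing A] [IsNoetherianRing A] [IsLocalRing A]
    {E : Type} [AddCommGroup E] [Module A E]

/-- The evaluation map into the double dual. -/
def ev (A E M : Type) [CommRing A] [AddCommGroup E] [Module A E]
    [AddCommGroup M] [Module A M] : M →ₗ[A] ((M →ₗ[A] E) →ₗ[A] E) := LinearMap.applyₗ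

lemma ev_apply {M : Type} [AddCommGroup M] [Module A M] (x : M) (φ : M →ₗ[A] E) :
    ev A E M x φ = φ x := rfl

lemma smul_range (f : (A ⧸ maximalIdeal A) →ₗ[A] E) {a : A} (ha : a ∈ maximalIdeal A)
    {y : E} (hy : y ∈ LinearMap.range f) : a • y = 0 := by
  obtain ⟨z, rfl⟩ := hy
  obtain ⟨b, rfl⟩ := Ideal.Quotient.mk_surjective z
  rw [← map_smul]
  have : a • (Ideal.Quotient.mk (maximalIdeal A) b) = 0 := by
    rw [Algebra.smul_def, Ideal.Quotient.algebraMap_eq, ← map_mul]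
    exact Ideal.Quotient.eq_zero_iff_mem.mpr (Ideal.mul_mem_right _ _ ha)
  rw [this, map_zero]

lemma soc (f : (A ⧸ maximalIdeal A) →ₗ[A] E)
    (hess : ∀ N : Submodule A E, N ⊓ LinearMap.range f = ⊥ → N = ⊥)
    (x : E) (hx : ∀ a ∈ maximalIdeal A, a • x = 0) : x ∈ LinearMap.range f := by
  by_contra hn
  have h0 : x = 0 := by
    have := hess (A ∙ x) ?_
    · simpa using this
    · rw [eq_bot_iff]
      rintro y ⟨hy1, hy2⟩
      obtain ⟨a, rfl⟩ := Submodule.mem_span_singleton.mp hy1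
      by_cases ha : a ∈ maximalIdeal A
      · simp [hx a ha]
      · have hu : IsUnit a := by simpa using ha
        obtain ⟨u, rfl⟩ := hu
        exfalso; apply hn
        have := Submodule.smul_mem (LinearMap.range f) (↑(u⁻¹) : A) hy2
        rwa [smul_smul, Units.inv_mul, one_smul] at this
  exact hn (h0 ▸ Submodule.zero_mem _)

lemma killed (f : (A ⧸ maximalIdeal A) →ₗ[A] E)
    (hess : ∀ N : Submodule A E, N ⊓ LinearMap.range f = ⊥ → N = ⊥)
    {M : Type} [AddCommGroup M] [Module A M] [Module.Finite A M] (φ : M →ₗ[A] E) :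
    ∃ n : ℕ, (maximalIdeal A ^ n • ⊤ : Submodule A M) ≤ LinearMap.ker φ := by
  obtain ⟨k, hk⟩ := Ideal.exists_pow_inf_eq_pow_smul (maximalIdeal A)
    ((LinearMap.range f).comap φ)
  have h1 := hk (k + 1) (by omega)
  refine ⟨k + 1, ?_⟩
  have h2 := hess ((maximalIdeal A ^ (k + 1) • ⊤ : Submodule A M).map φ) ?_
  · intro x hx
    have := Submodule.mem_map_of_mem (f := φ) hx
    rw [h2] at this
    exact this
  · rw [eq_bot_iff]
    rintro _ ⟨⟨x, hx, rfl⟩, hy⟩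
    have hx' : x ∈ (maximalIdeal A ^ (k + 1) • ⊤ : Submodule A M) ⊓
      (LinearMap.range f).comap φ := ⟨hx, hy⟩
    rw [h1, show k + 1 - k = 1 by omega, pow_one] at hx'
    change φ x = 0
    refine Submodule.smul_induction_on hx' ?_ ?_
    · intro a ha z hz
      rw [map_smul]
      exact smul_range f ha hz.2
    · intro a b ha hb
      rw [map_add, ha, hb, add_zero]

lemma ev_injective [Module.Injective A E] (f : (A ⧸ maximalIdeal A) →ₗ[A] E)
    (hf : Function.Injective f) (M : Type) [AddCommGroup M] [Module A M] :
    Function.Injective (ev A E M) := by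
  rw [injective_iff_map_eq_zero]
  intro x hx
  by_contra hne
  -- the annihilator is proper
  have hle : LinearMap.ker (LinearMap.toSpanSingleton A M x) ≤
      LinearMap.ker (Submodule.mkQ (maximalIdeal A)) := by
    rw [Submodule.ker_mkQ]
    apply IsLocalRing.le_maximalIdeal
    intro h
    apply hne
    have : (1 : A) ∈ LinearMap.ker (LinearMap.toSpanSingleton A M x) := by
      rw [h]; trivial
    simpa using this
  let s := LinearMap.toSpanSingleton A M x
  let g : (A ⧸ LinearMap.ker s) →ₗ[A] E := f ∘ₗ (LinearMap.ker s).liftQ _ hle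
  let i : (A ⧸ LinearMap.ker s) →ₗ[A] M := (LinearMap.ker s).liftQ s le_rfl
  have hi : Function.Injective i := by
    rw [← LinearMap.ker_eq_bot]; exact Submodule.ker_liftQ_eq_bot _ _ _ le_rfl
  obtain ⟨h, hh⟩ := Module.Injective.extension_property A E _ _ i hi g
  have h1 := LinearMap.congr_fun hh (Submodule.Quotient.mk 1)
  have h2 : h x = 0 := by
    have := LinearMap.congr_fun hx h
    simpa [ev_apply] using this
  have h4 : i (Submodule.Quotient.mk 1) = x := one_smul A x
  rw [LinearMap.comp_apply, h4, h2] at h1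
  have h5 : f 1 = 0 := h1.symm
  have h3 : (1 : A ⧸ maximalIdeal A) = 0 := hf (h5.trans (map_zero f).symm)
  exact one_ne_zero h3

lemma ev_surjective_k (f : (A ⧸ maximalIdeal A) →ₗ[A] E)
    (hess : ∀ N : Submodule A E, N ⊓ LinearMap.range f = ⊥ → N = ⊥) :
    Function.Surjective (ev A E (A ⧸ maximalIdeal A)) := by
  have key : ∀ φ : (A ⧸ maximalIdeal A) →ₗ[A] E, ∀ a ∈ maximalIdeal A, a • φ = 0 := by
    intro φ a ha
    ext
    exact smul_range φ ha ⟨_, rfl⟩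
  intro ψ
  obtain ⟨x, hx⟩ := soc f hess (ψ f) (fun a ha => by rw [← map_smul, key f a ha, map_zero])
  refine ⟨x, ?_⟩
  ext φ
  obtain ⟨y, hy⟩ := soc f hess (φ 1) (fun a ha => smul_range φ ha ⟨_, rfl⟩)
  obtain ⟨a, rfl⟩ := Ideal.Quotient.mk_surjective y
  have : φ = a • f := by
    apply Submodule.linearMap_qext
    ext
    change φ 1 = a • f 1
    rw [← hy, ← map_smul, Algebra.smul_def, mul_one]; rfl
  rw [ev_apply, this, map_smul, ← hx]; rfl

lemma ev_surjective_equiv {M N : Type} [AddCommGroup M] [Module A M] [AddCommGroup N]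
    [Module A N] (e : M ≃ₗ[A] N) (h : Function.Surjective (ev A E M)) :
    Function.Surjective (ev A E N) := by
  intro ψ
  obtain ⟨x, hx⟩ := h (ψ ∘ₗ LinearMap.lcomp A E e.symm.toLinearMap)
  refine ⟨e x, ?_⟩
  ext φ
  have := LinearMap.congr_fun hx (φ ∘ₗ e.toLinearMap)
  simp only [ev_apply, LinearMap.comp_apply, LinearMap.lcomp_apply'] at this ⊢
  refine this.trans ?_
  congr 1
  ext; simp

lemma ev_surjective_simple (f : (A ⧸ maximalIdeal A) →ₗ[A] E)
    (hess : ∀ N : Submodule A E, N ⊓ LinearMap.range f = ⊥ → N = ⊥)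
    (M : Type) [AddCommGroup M] [Module A M] [IsSimpleModule A M] :
    Function.Surjective (ev A E M) := by
  obtain ⟨I, hI, ⟨e⟩⟩ := isSimpleModule_iff_quot_maximal.mp (inferInstance : IsSimpleModule A M)
  obtain rfl := IsLocalRing.eq_maximalIdeal hI
  exact ev_surjective_equiv e.symm (ev_surjective_k f hess)

lemma ev_surjective_ext [Module.Injective A E] {M : Type} [AddCommGroup M] [Module A M]
    (N : Submodule A M) (hN : Function.Surjective (ev A E N))
    (hQ : Function.Surjective (ev A E (M ⧸ N))) : Function.Surjective (ev A E M) := by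
  intro ψ
  obtain ⟨q, hq⟩ := hQ (ψ ∘ₗ LinearMap.lcomp A E N.mkQ)
  obtain ⟨x, rfl⟩ := N.mkQ_surjective q
  -- the difference kills maps vanishing on N
  have h1 : ∀ φ : M →ₗ[A] E, φ ∘ₗ N.subtype = 0 → ψ φ = φ x := by
    intro φ hφ
    have hle : N ≤ LinearMap.ker φ := fun y hy => LinearMap.congr_fun hφ ⟨y, hy⟩
    have := LinearMap.congr_fun hq (N.liftQ φ hle)
    simp only [ev_apply, LinearMap.comp_apply, LinearMap.lcomp_apply', Submodule.liftQ_mkQ,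
      Submodule.mkQ_apply, Submodule.liftQ_apply] at this
    exact this.symm
  have hext : ∀ g : N →ₗ[A] E, ∃ h : M →ₗ[A] E, h ∘ₗ N.subtype = g := fun g =>
    Module.Injective.extension_property A E _ _ N.subtype N.injective_subtype g
  choose r hr using hext
  have h2 : ∀ φ φ' : M →ₗ[A] E, φ ∘ₗ N.subtype = φ' ∘ₗ N.subtype →
      ψ φ - φ x = ψ φ' - φ' x := by
    intro φ φ' h
    have := h1 (φ - φ') (by rw [LinearMap.sub_comp, h, sub_self])
    rw [map_sub, LinearMap.sub_apply] at this
    rw [sub_eq_sub_iff_sub_eq_sub, this]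
  let ψ' : (N →ₗ[A] E) →ₗ[A] E :=
    { toFun := fun g => ψ (r g) - r g x
      map_add' := fun g g' => by
        rw [h2 (r (g + g')) (r g + r g') (by rw [LinearMap.add_comp, hr, hr, hr])]
        rw [map_add, LinearMap.add_apply]; abel
      map_smul' := fun a g => by
        rw [h2 (r (a • g)) (a • r g) (by rw [LinearMap.smul_comp, hr, hr])]
        rw [map_smul, LinearMap.smul_apply, RingHom.id_apply, smul_sub] }
  obtain ⟨y, hy⟩ := hN ψ'
  refine ⟨x + y, ?_⟩
  ext φ
  have h3 := LinearMap.congr_fun hy (φ ∘ₗ N.subtype)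
  have h4 : ψ' (φ ∘ₗ N.subtype) = ψ φ - φ x := h2 _ _ (hr _)
  rw [h4, ev_apply] at h3
  rw [ev_apply, map_add]
  change φ y = _ at h3
  rw [h3]; abel

lemma ev_surjective_fl [Module.Injective A E] (f : (A ⧸ maximalIdeal A) →ₗ[A] E)
    (hess : ∀ N : Submodule A E, N ⊓ LinearMap.range f = ⊥ → N = ⊥)
    {M : Type} [AddCommGroup M] [Module A M] (h : IsFiniteLength A M) :
    Function.Surjective (ev A E M) := by
  induction h with
  | @of_subsingleton M _ _ _ =>
    intro ψ
    refine ⟨0, ?_⟩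
    ext φ
    rw [Subsingleton.elim φ 0, map_zero, map_zero]
  | @of_simple_quotient M _ _ N _ _ ih =>
    exact ev_surjective_ext N ih (ev_surjective_simple f hess _)

lemma fl (M : Type) [AddCommGroup M] [Module A M] [Module.Finite A M] (n : ℕ) :
    IsFiniteLength A (M ⧸ (maximalIdeal A ^ n • ⊤ : Submodule A M)) := by
  rw [isFiniteLength_iff_isNoetherian_isArtinian]
  refine ⟨inferInstance, ?_⟩
  have hA : IsArtinianRing (A ⧸ maximalIdeal A ^ n) := by
    rcases subsingleton_or_nontrivial (A ⧸ maximalIdeal A ^ n) with h | h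
    · infer_instance
    · have : IsLocalRing (A ⧸ maximalIdeal A ^ n) :=
        .of_surjective' (Ideal.Quotient.mk _) Ideal.Quotient.mk_surjective
      rw [isArtinianRing_iff_isNilpotent_maximalIdeal]
      refine ⟨n, ?_⟩
      have : maximalIdeal (A ⧸ maximalIdeal A ^ n) =
          (maximalIdeal A).map (Ideal.Quotient.mk _) := by
        have hm : maximalIdeal A = (maximalIdeal (A ⧸ maximalIdeal A ^ n)).comap
            (Ideal.Quotient.mk (maximalIdeal A ^ n)) :=
          (IsLocalRing.eq_maximalIdeal
            (Ideal.comap_isMaximal_of_surjective _ Ideal.Quotient.mk_surjective)).symm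
        exact (Ideal.map_comap_of_surjective _ Ideal.Quotient.mk_surjective _).symm.trans
          (congrArg _ hm.symm)
      rw [this, ← Ideal.map_pow, Ideal.map_quotient_self]; rfl
  have : Module.Finite (A ⧸ maximalIdeal A ^ n)
      (M ⧸ (maximalIdeal A ^ n • ⊤ : Submodule A M)) := Module.Finite.of_restrictScalars_finite A _ _
  exact isArtinian_of_surjective_algebraMap (R := A ⧸ maximalIdeal A ^ n)
    Ideal.Quotient.mk_surjective

lemma exists_g {M : Type} [AddCommGroup M] [Module A M] (P : Submodule A M)
    (hb : Function.Bijective (ev A E (M ⧸ P))) :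
    ∃ g : ((M →ₗ[A] E) →ₗ[A] E) →ₗ[A] M ⧸ P,
      ∀ ψ (φ : (M ⧸ P) →ₗ[A] E), φ (g ψ) = ψ (φ ∘ₗ P.mkQ) := by
  let e := LinearEquiv.ofBijective (ev A E (M ⧸ P)) hb
  refine ⟨e.symm.toLinearMap ∘ₗ LinearMap.lcomp A E (LinearMap.lcomp A E P.mkQ), ?_⟩
  intro ψ φ
  have h1 := e.apply_symm_apply (LinearMap.lcomp A E (LinearMap.lcomp A E P.mkQ) ψ)
  exact LinearMap.congr_fun h1 φ

lemma trans_mkQ {M : Type} [AddCommGroup M] [Module A M] {m n : ℕ} (h : m ≤ n) :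
    AdicCompletion.transitionMap (maximalIdeal A) M h ∘ₗ
      (maximalIdeal A ^ n • ⊤ : Submodule A M).mkQ =
      (maximalIdeal A ^ m • ⊤ : Submodule A M).mkQ := rfl

end Matlis

open Matlis in
/-- Matlis duality: let `(A, m, k)` be a Noetherian local ring, `E` an injective hull of
the residue field `k = A/m`, and `M` a finitely generated `A`-module. Then the double
Matlis dual `Hom_A(Hom_A(M, E), E)` is isomorphic to the `m`-adic completion of `M`. -/
theorem stmt18 (A : Type) [CommRing A] [IsNoetherianRing A] [IsLocalRing A]
    (E : Type) [AddCommGroup E] [Module A E] (hE : Module.Injective A E)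
    (f : (A ⧸ IsLocalRing.maximalIdeal A) →ₗ[A] E) (hf : Function.Injective f)
    (hess : ∀ N : Submodule A E, N ⊓ LinearMap.range f = ⊥ → N = ⊥)
    (M : Type) [AddCommGroup M] [Module A M] [Module.Finite A M] :
    Nonempty (((M →ₗ[A] E) →ₗ[A] E)
      ≃ₗ[A] AdicCompletion (IsLocalRing.maximalIdeal A) M) := by
  let P : ℕ → Submodule A M := fun n => maximalIdeal A ^ n • ⊤
  have hex : ∀ n, ∃ g : ((M →ₗ[A] E) →ₗ[A] E) →ₗ[A] M ⧸ P n,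
      ∀ ψ (φ : (M ⧸ P n) →ₗ[A] E), φ (g ψ) = ψ (φ ∘ₗ (P n).mkQ) := fun n =>
    exists_g (P n) ⟨ev_injective f hf _, ev_surjective_fl f hess (fl M n)⟩
  choose g hg using hex
  have huniq : ∀ n (x y : M ⧸ P n), (∀ φ : (M ⧸ P n) →ₗ[A] E, φ x = φ y) → x = y := by
    intro n x y h
    apply ev_injective f hf
    ext φ
    exact h φ
  have hcompat : ∀ {m n : ℕ} (hle : m ≤ n),
      AdicCompletion.transitionMap (maximalIdeal A) M hle ∘ₗ g n = g m := by
    intro m n hle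
    ext ψ
    apply huniq
    intro φ
    rw [hg]
    have h1 := hg n ψ (φ ∘ₗ AdicCompletion.transitionMap (maximalIdeal A) M hle)
    rw [LinearMap.comp_assoc, trans_mkQ] at h1
    exact h1
  let Φ := AdicCompletion.lift (maximalIdeal A) g hcompat
  have hΦ : ∀ n ψ, (Φ ψ).val n = g n ψ := fun n ψ =>
    AdicCompletion.eval_lift_apply (maximalIdeal A) g hcompat n ψ
  refine ⟨LinearEquiv.ofBijective Φ ⟨?_, ?_⟩⟩
  · rw [injective_iff_map_eq_zero]
    intro ψ hψ
    ext φ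
    obtain ⟨n, hn⟩ := killed f hess φ
    have h1 := hg n ψ ((P n).liftQ φ hn)
    rw [Submodule.liftQ_mkQ, ← hΦ, hψ, AdicCompletion.val_zero_apply, map_zero] at h1
    rw [← h1, LinearMap.zero_apply]
  · intro z
    have hlift : ∀ φ : M →ₗ[A] E, ∃ y : E, ∀ n (φ' : (M ⧸ P n) →ₗ[A] E),
        φ' ∘ₗ (P n).mkQ = φ → φ' (z.val n) = y := by
      intro φ
      obtain ⟨n, hn⟩ := killed f hess φ
      have aux : ∀ m n, m ≤ n → ∀ (φ₁ : (M ⧸ P m) →ₗ[A] E) (φ₂ : (M ⧸ P n) →ₗ[A] E),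
          φ₁ ∘ₗ (P m).mkQ = φ₂ ∘ₗ (P n).mkQ → φ₁ (z.val m) = φ₂ (z.val n) := by
        intro m n hmn φ₁ φ₂ h
        rw [← AdicCompletion.transitionMap_comp_eval_apply _ _ hmn z]
        have : φ₁ ∘ₗ AdicCompletion.transitionMap (maximalIdeal A) M hmn = φ₂ := by
          apply Submodule.linearMap_qext
          rw [← h, LinearMap.comp_assoc, trans_mkQ]
        rw [← this, LinearMap.comp_apply]
      refine ⟨(P n).liftQ φ hn (z.val n), ?_⟩
      intro m φ' h
      have h' : φ' ∘ₗ (P m).mkQ = (P n).liftQ φ hn ∘ₗ (P n).mkQ := by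
        rw [h, Submodule.liftQ_mkQ]
      rcases le_total m n with hmn | hmn
      · exact aux m n hmn _ _ h'
      · exact (aux n m hmn _ _ h'.symm).symm
    choose v hv using hlift
    have hle : ∀ {m n : ℕ}, m ≤ n → P n ≤ P m := fun h =>
      Submodule.smul_mono_left (Ideal.pow_le_pow_right h)
    let ψ : (M →ₗ[A] E) →ₗ[A] E :=
      { toFun := v
        map_add' := fun φ₁ φ₂ => by
          obtain ⟨n₁, h₁⟩ := killed f hess φ₁
          obtain ⟨n₂, h₂⟩ := killed f hess φ₂
          have h₁' := (hle (le_max_left n₁ n₂)).trans h₁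
          have h₂' := (hle (le_max_right n₁ n₂)).trans h₂
          rw [← hv φ₁ _ _ (Submodule.liftQ_mkQ _ φ₁ h₁'),
            ← hv φ₂ _ _ (Submodule.liftQ_mkQ _ φ₂ h₂'), ← LinearMap.add_apply]
          symm
          apply hv
          rw [LinearMap.add_comp, Submodule.liftQ_mkQ, Submodule.liftQ_mkQ]
        map_smul' := fun a φ => by
          obtain ⟨n, h⟩ := killed f hess φ
          rw [← hv φ n _ (Submodule.liftQ_mkQ _ φ h), RingHom.id_apply, ← LinearMap.smul_apply]
          symm
          apply hv
          rw [LinearMap.smul_comp, Submodule.liftQ_mkQ] }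
    refine ⟨ψ, ?_⟩
    apply AdicCompletion.ext
    intro n
    rw [hΦ]
    apply huniq
    intro φ
    rw [hg]
    exact (hv _ n φ rfl).symm
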